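/- Let L be a finite lattice, let (J(L), ≤, M) be its join-presentation, and let 𝔏_L be the lattice of closed downsets of this presentation, ordered by inclusion. Then the map a ↦ {j ∈ J(L) | j ≤ a} is an order isomorphism from L onto 𝔏_L, with inverse S ↦ ⋁S. -/

import Mathlib

/-- The refinement relation: `A ≪ B` iff every element of `A` is below some element of `B`. -/
def Refines {L : Type*} [Preorder L] (A B : Set L) : Prop :=
  ∀ a ∈ A, ∃ b ∈ B, a ≤ b

/-- An element `j ≠ ⊥` is join-irreducible if `j = a ∨ b` implies `j = a` or `j = b`. -/
def JoinIrr {L : Type*} [Lattice L] [OrderBot L] (j : L) : Prop :=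
  j ≠ ⊥ ∧ ∀ a b : L, j = a ⊔ b → j = a ∨ j = b

/-- `C` is a minimal join-cover of `a`: `C` is a join-cover of `a` (`a ≤ ⋁C`), `C` is an
`≤`-antichain, and every `≤`-antichain `D` with `a ≤ ⋁D` and `D ≪ C` equals `C`. -/
def MinJoinCover {L : Type*} [CompleteLattice L] (a : L) (C : Set L) : Prop :=
  a ≤ sSup C ∧ IsAntichain (· ≤ ·) C ∧
    ∀ D : Set L, IsAntichain (· ≤ ·) D → a ≤ sSup D → Refines D C → D = C

/-- The closure map of the join-presentation of `L`: for a subset `S` of `J(L)`,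
`cl(S) := {j ∈ J(L) | ∃ C ∈ M(j), C ⊆ S}` (join-irreducibles are represented as
elements of `L` satisfying `JoinIrr`). -/
def clJ {L : Type*} [CompleteLattice L] (S : Set L) : Set L :=
  {j : L | JoinIrr j ∧ ∃ C : Set L, MinJoinCover j C ∧ C ⊆ S}

/-!
The sets `clJ S` and `{j ∈ J(L) | j ≤ ⋁S}` coincide for every downset `S` of `J(L)`: if `j ≤ ⋁S`,
the cover `S` of `j` refines to a minimal one, whose elements are join-irreducible by minimality and
therefore lie in `S`. Hence the closed downsets are exactly the sets `{j ∈ J(L) | j ≤ a}`, and such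
a set determines `a` because `a` is its join.

Minimal covers exist because the ascending chain condition reduces arbitrary joins to finite ones
and the descending one makes refinement of finite antichains well-founded: a proper refinement is a
descent in the Dershowitz–Manna order on multisets.
-/

namespace Refines

variable {L : Type*}

theorem of_subset [Preorder L] {A B : Set L} (h : A ⊆ B) : Refines A B :=
  fun a ha ↦ ⟨a, h ha, le_rfl⟩

theorem trans [Preorder L] {A B C : Set L} (hAB : Refines A B) (hBC : Refines B C) :
    Refines A C := fun a ha ↦
  let ⟨_, hb, hab⟩ := hAB a ha
  let ⟨c, hc, hbc⟩ := hBC _ hb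
  ⟨c, hc, hab.trans hbc⟩

theorem eq_of_isAntichain_of_subset [Preorder L] {A B : Set L} (hBA : Refines B A)
    (hB : IsAntichain (· ≤ ·) B) (hAB : A ⊆ B) : B = A := by
  refine Set.Subset.antisymm (fun b hb ↦ ?_) hAB
  obtain ⟨a, ha, hba⟩ := hBA b hb
  rwa [hB.eq hb (hAB ha) hba]

theorem isDershowitzMannaLT [PartialOrder L] {A B : Finset L} (hAB : Refines (A : Set L) B)
    (hA : IsAntichain (· ≤ ·) (A : Set L)) (hne : A ≠ B) :
    Multiset.IsDershowitzMannaLT A.val B.val := by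
  classical
  have not_subset : ¬ B ⊆ A := fun hBA ↦
    hne (Finset.coe_injective (hAB.eq_of_isAntichain_of_subset hA (Finset.coe_subset.2 hBA)))
  refine ⟨(A ∩ B).val, (A \ B).val, (B \ A).val, ?_, ?_, ?_, fun a ha ↦ ?_⟩
  · rwa [Ne, Multiset.empty_eq_zero, Finset.val_eq_zero, Finset.sdiff_eq_empty_iff_subset]
  · rw [Finset.inter_val, Finset.sdiff_val, add_comm, Multiset.sub_add_inter]
  · rw [Finset.inter_val, Finset.sdiff_val, Multiset.inter_comm, add_comm, Multiset.sub_add_inter]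
  · obtain ⟨haA, haB⟩ := Finset.mem_sdiff.1 ha
    obtain ⟨b, hb, hab⟩ := hAB a haA
    have hne_ab : a ≠ b := fun h ↦ haB (h ▸ hb)
    exact ⟨b, Finset.mem_sdiff.2 ⟨hb, fun hbA ↦ hA haA hbA hne_ab hab⟩, hab.lt_of_ne hne_ab⟩

end Refines

theorem exists_finset_isAntichain_sSup_eq {L : Type*} [CompleteLattice L] [WellFoundedGT L]
    (S : Set L) :
    ∃ F : Finset L,
      (F : Set L) ⊆ S ∧ IsAntichain (· ≤ ·) (F : Set L) ∧ sSup (F : Set L) = sSup S := by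
  classical
  obtain ⟨T, hTS, hT⟩ := CompleteLattice.WellFoundedGT.isSupFiniteCompact L S
  refine ⟨{x ∈ T | Maximal (· ∈ T) x}, ?_, ?_, ?_⟩
  · exact fun x hx ↦ hTS (Finset.mem_of_mem_filter x hx)
  · exact (setOfPred_maximal_antichain (· ∈ T)).subset fun x hx ↦ (Finset.mem_filter.1 hx).2
  · rw [hT, Finset.sup_id_eq_sSup]
    refine le_antisymm (sSup_le_sSup (T.filter_subset _)) (sSup_le fun x hx ↦ ?_)
    obtain ⟨m, hxm, hm⟩ := T.exists_le_maximal hx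
    exact hxm.trans (le_sSup (by simpa using ⟨hm.prop, hm⟩))

namespace MinJoinCover

variable {L : Type*} [CompleteLattice L] [WellFoundedGT L] {a c : L} {C D T : Set L}

theorem subset_of_refines (hC : MinJoinCover a C) (ha : a ≤ sSup D) (hDC : Refines D C) :
    C ⊆ D := by
  obtain ⟨F, hFD, hF, hsup⟩ := exists_finset_isAntichain_sSup_eq D
  rwa [← hC.2.2 F hF (hsup ▸ ha) ((Refines.of_subset hFD).trans hDC)]

theorem mem_of_le_sSup (hC : MinJoinCover a C) (hc : c ∈ C) (hT : ∀ t ∈ T, t ≤ c)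
    (hcT : c ≤ sSup T) : c ∈ T := by
  -- Replacing `c` by `T` in `C` gives a refining cover, which contains `c` by minimality.
  have cover : a ≤ sSup (C \ {c} ∪ T) := by
    refine hC.1.trans (sSup_le fun x hx ↦ ?_)
    by_cases hxc : x = c
    · rw [hxc]
      exact hcT.trans (sSup_le_sSup Set.subset_union_right)
    · exact le_sSup (.inl ⟨hx, hxc⟩)
  have refines : Refines (C \ {c} ∪ T) C := by
    rintro x (hx | hx)
    · exact ⟨x, hx.1, le_rfl⟩
    · exact ⟨c, hc, hT x hx⟩
  simpa using hC.subset_of_refines cover refines hc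

theorem joinIrr_of_mem (hC : MinJoinCover a C) (hc : c ∈ C) : JoinIrr c := by
  refine ⟨?_, fun x y hxy ↦ ?_⟩
  · rintro rfl
    simpa using hC.mem_of_le_sSup (T := ∅) hc (by simp) (by simp)
  · simpa using hC.mem_of_le_sSup (T := {x, y}) hc (by simp [hxy]) (by simp [hxy])

end MinJoinCover

theorem exists_minJoinCover_refines {L : Type*} [CompleteLattice L] [WellFoundedLT L]
    [WellFoundedGT L] {a : L} {S : Set L} (ha : a ≤ sSup S) :
    ∃ C : Set L, MinJoinCover a C ∧ Refines C S := by
  obtain ⟨F₀, hF₀S, hF₀, hsup₀⟩ := exists_finset_isAntichain_sSup_eq S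
  obtain ⟨C, ⟨hC, haC, hCS⟩, hmin⟩ :=
    (InvImage.wf Finset.val Multiset.wellFounded_isDershowitzMannaLT).has_min
      {F : Finset L |
        IsAntichain (· ≤ ·) (F : Set L) ∧ a ≤ sSup (F : Set L) ∧ Refines (F : Set L) S}
      ⟨F₀, hF₀, hsup₀ ▸ ha, .of_subset hF₀S⟩
  refine ⟨C, ⟨haC, hC, fun D hD haD hDC ↦ ?_⟩, hCS⟩
  obtain ⟨F, hFD, hF, hsup⟩ := exists_finset_isAntichain_sSup_eq D
  have hFC : Refines (F : Set L) C := (Refines.of_subset hFD).trans hDC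
  have F_eq_C : F = C := by
    by_contra hne
    exact hmin F ⟨hF, hsup ▸ haD, hFC.trans hCS⟩ (hFC.isDershowitzMannaLT hF hne)
  exact hDC.eq_of_isAntichain_of_subset hD (F_eq_C ▸ hFD)

theorem joinIrr_iff_supIrred {L : Type*} [Lattice L] [OrderBot L] {j : L} :
    JoinIrr j ↔ SupIrred j := by
  simp only [JoinIrr, SupIrred, isMin_iff_eq_bot, ne_eq, eq_comm]

/-- The set `{j ∈ J(L) | j ≤ a}`, represented, as in `clJ`, by elements of `L` satisfying
`JoinIrr`. -/
def joinIrrBelow {L : Type*} [Lattice L] [OrderBot L] (a : L) : Set L :=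
  {j : L | JoinIrr j ∧ j ≤ a}

section joinIrrBelow

variable {L : Type*} [Lattice L] [OrderBot L] [WellFoundedLT L] {a b : L}

theorem isLUB_joinIrrBelow (a : L) : IsLUB (joinIrrBelow a) a := by
  refine ⟨fun j hj ↦ hj.2, fun b hb ↦ ?_⟩
  obtain ⟨s, rfl, hs⟩ := exists_supIrred_decomposition a
  exact Finset.sup_le fun j hj ↦ hb ⟨joinIrr_iff_supIrred.2 (hs hj), Finset.le_sup (f := id) hj⟩

theorem joinIrrBelow_subset_joinIrrBelow : joinIrrBelow a ⊆ joinIrrBelow b ↔ a ≤ b :=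
  ⟨fun h ↦ (isLUB_joinIrrBelow a).mono (isLUB_joinIrrBelow b) h,
    fun hab _ hj ↦ ⟨hj.1, hj.2.trans hab⟩⟩

end joinIrrBelow

section clJ

variable {L : Type*} [CompleteLattice L] [WellFoundedLT L] [WellFoundedGT L]

theorem clJ_eq_joinIrrBelow_sSup {S : Set L}
    (hS : ∀ x y : L, JoinIrr x → y ∈ S → x ≤ y → x ∈ S) : clJ S = joinIrrBelow (sSup S) := by
  ext j
  refine and_congr_right fun _ ↦ ⟨fun ⟨C, hC, hCS⟩ ↦ hC.1.trans (sSup_le_sSup hCS), fun hj ↦ ?_⟩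
  obtain ⟨C, hC, hCS⟩ := exists_minJoinCover_refines hj
  refine ⟨C, hC, fun c hc ↦ ?_⟩
  obtain ⟨s, hs, hcs⟩ := hCS c hc
  exact hS c s (hC.joinIrr_of_mem hc) hs hcs

theorem clJ_joinIrrBelow (a : L) : clJ (joinIrrBelow a) = joinIrrBelow a := by
  rw [clJ_eq_joinIrrBelow_sSup (S := joinIrrBelow a) fun _ _ hx hy hxy ↦ ⟨hx, hxy.trans hy.2⟩,
    (isLUB_joinIrrBelow a).sSup_eq]

end clJ

theorem orderIso_closedDownsets_general {L : Type*} [CompleteLattice L] [WellFoundedLT L]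
    [WellFoundedGT L] :
    ∃ e : L ≃o {S : Set L // (∀ x ∈ S, JoinIrr x) ∧
        (∀ x y : L, JoinIrr x → y ∈ S → x ≤ y → x ∈ S) ∧ clJ S = S},
      (∀ a : L, (e a : Set L) = {j : L | JoinIrr j ∧ j ≤ a}) ∧
      (∀ S, e.symm S = sSup (S : Set L)) := by
  refine ⟨{ toFun := fun a ↦ ⟨joinIrrBelow a, fun x hx ↦ hx.1,
              fun x y hx hy hxy ↦ ⟨hx, hxy.trans hy.2⟩, clJ_joinIrrBelow a⟩
            invFun := fun S ↦ sSup (S : Set L)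
            left_inv := fun a ↦ (isLUB_joinIrrBelow a).sSup_eq
            right_inv := fun ⟨S, _, hdown, hclosed⟩ ↦
              Subtype.ext ((clJ_eq_joinIrrBelow_sSup hdown).symm.trans hclosed)
            map_rel_iff' := joinIrrBelow_subset_joinIrrBelow },
    fun _ ↦ rfl, fun _ ↦ rfl⟩

/-- For a finite lattice `L`, the map `a ↦ {j ∈ J(L) | j ≤ a}` is an
order isomorphism from `L` onto the lattice `𝔏_L` of closed downsets of the
join-presentation of `L` (ordered by inclusion), with inverse `S ↦ ⋁S`. -/
theorem orderIso_closedDownsets {L : Type*} [CompleteLattice L] [Fintype L] :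
    ∃ e : L ≃o {S : Set L // (∀ x ∈ S, JoinIrr x) ∧
        (∀ x y : L, JoinIrr x → y ∈ S → x ≤ y → x ∈ S) ∧ clJ S = S},
      (∀ a : L, (e a : Set L) = {j : L | JoinIrr j ∧ j ≤ a}) ∧
      (∀ S, e.symm S = sSup (S : Set L)) :=
  orderIso_closedDownsets_general
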